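/- arXiv:1008.1652 — 8 statements merged into one kernel-verified Lean document; each statement's English description precedes it below -/
import Mathlib

section
/- For every regular language L over a finite alphabet Σ, the transition complexity of L equals the sum over all symbols b ∈ Σ of the b-transition complexity of L, i.e. tc(L) = Σ_{b ∈ Σ} tc_b(L). -/
/-- An incomplete DFA over alphabet `α` with state type `σ`:
the transition function is a partial function, modelled as `Option`-valued. -/
structure IDFA (α : Type) (σ : Type) where
  /-- The (partial) transition function. -/
  step : σ → α → Option σ
  /-- The start state. -/
  start : σ
  /-- The set of accepting states. -/
  accept : Set σ

namespace IDFA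

variable {α σ : Type}

/-- The extended (partial) transition function on words. -/
def evalFrom (A : IDFA α σ) (q : σ) (w : List α) : Option σ :=
  w.foldl (fun oq a => oq.bind fun p => A.step p a) (some q)

/-- Running the automaton from the start state. -/
def eval (A : IDFA α σ) (w : List α) : Option σ :=
  A.evalFrom A.start w

/-- The language recognized by an incomplete DFA: words on which the run is
defined and ends in an accepting state. -/
def accepts (A : IDFA α σ) : Set (List α) :=
  {w | ∃ q ∈ A.accept, A.eval w = some q}

/-- `#tr(A)`: the number of (defined) transitions of `A`. -/
noncomputable def trCount (A : IDFA α σ) : ℕ :=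
  {p : σ × α | (A.step p.1 p.2).isSome}.ncard

/-- `#tr(A, b)`: the number of `b`-transitions of `A`. -/
noncomputable def trCountOn (A : IDFA α σ) (b : α) : ℕ :=
  {q : σ | (A.step q b).isSome}.ncard

/-- An incomplete DFA is connected if every state is reachable from the start state. -/
def Connected (A : IDFA α σ) : Prop :=
  ∀ q : σ, ∃ w : List α, A.evalFrom A.start w = some q

end IDFA

/-- A language is regular iff it is recognized by some incomplete DFA with
finitely many states. -/
def IsRegularLang {α : Type} (L : Set (List α)) : Prop :=
  ∃ (σ : Type) (_ : Finite σ) (A : IDFA α σ), A.accepts = L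

/-- `tc(L)`: the transition complexity of `L`, i.e. the minimal number of
transitions of any incomplete DFA recognizing `L`. -/
noncomputable def tc {α : Type} (L : Set (List α)) : ℕ :=
  sInf {n | ∃ (σ : Type) (_ : Finite σ) (A : IDFA α σ), A.accepts = L ∧ A.trCount = n}

/-- `tc_b(L)`: the `b`-transition complexity of `L`, i.e. the minimal number of
`b`-transitions of any incomplete DFA recognizing `L`. -/
noncomputable def tcOn {α : Type} (L : Set (List α)) (b : α) : ℕ :=
  sInf {n | ∃ (σ : Type) (_ : Finite σ) (A : IDFA α σ), A.accepts = L ∧ A.trCountOn b = n}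

/-- `sc(L)`: the (incomplete-DFA) state complexity of `L`, i.e. the number of
states of a minimal incomplete DFA recognizing `L`. -/
noncomputable def sc {α : Type} (L : Set (List α)) : ℕ :=
  sInf {n | ∃ (σ : Type) (_ : Finite σ) (A : IDFA α σ), A.accepts = L ∧ Nat.card σ = n}

namespace IDFA

variable {α σ : Type}

theorem foldl_none' (A : IDFA α σ) (w : List α) :
    w.foldl (fun oq a => oq.bind fun p => A.step p a) none = none := by
  induction w with
  | nil => rfl
  | cons a w ih => simpa using ih

theorem evalFrom_append' (A : IDFA α σ) (q : σ) (u v : List α) :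
    A.evalFrom q (u ++ v) = (A.evalFrom q u).bind fun p => A.evalFrom p v := by
  unfold evalFrom
  rw [List.foldl_append]
  cases h : List.foldl (fun oq a => oq.bind fun p => A.step p a) (some q) u with
  | none => simp [foldl_none']
  | some p => simp

theorem evalFrom_cons' (A : IDFA α σ) (q : σ) (a : α) (v : List α) :
    A.evalFrom q (a :: v) = (A.step q a).bind fun p => A.evalFrom p v := by
  have := evalFrom_append' A q [a] v
  simpa [evalFrom] using this

/-- Language accepted from a state. -/
def langFrom (A : IDFA α σ) (q : σ) : Set (List α) :=
  {v | ∃ p ∈ A.accept, A.evalFrom q v = some p}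

theorem mem_accepts_append (A : IDFA α σ) (u v : List α) :
    u ++ v ∈ A.accepts ↔ ∃ q, A.evalFrom A.start u = some q ∧ v ∈ A.langFrom q := by
  simp only [accepts, eval, langFrom, Set.mem_ofPred_eq, evalFrom_append', Option.bind_eq_some_iff]
  constructor
  · rintro ⟨p, hp, q, hq, h⟩; exact ⟨q, hq, p, hp, h⟩
  · rintro ⟨q, hq, p, hp, h⟩; exact ⟨p, hp, q, hq, h⟩

theorem trCount_eq_sum [Fintype α] [Finite σ] (A : IDFA α σ) :
    A.trCount = ∑ b : α, A.trCountOn b := by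
  classical
  have := Fintype.ofFinite σ
  unfold trCount trCountOn
  simp only [Set.ncard_eq_toFinset_card', Set.toFinset_ofPred, Finset.card_filter]
  rw [Fintype.sum_prod_type, Finset.sum_comm]

end IDFA

/-- Residual languages. -/
abbrev Resid {α : Type} (L : Set (List α)) : Type :=
  {R : Set (List α) // ∃ w, R = {v | w ++ v ∈ L}}

open Classical in
/-- The residual automaton. -/
noncomputable def residAut {α : Type} (L : Set (List α)) : IDFA α (Resid L) where
  step R a := if {v | a :: v ∈ R.1}.Nonempty then
      some ⟨{v | a :: v ∈ R.1}, by
        obtain ⟨R, w, rfl⟩ := R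
        exact ⟨w ++ [a], by simp⟩⟩
    else none
  start := ⟨L, [], by simp⟩
  accept := {R | [] ∈ R.1}

theorem residAut_langFrom {α : Type} (L : Set (List α)) (v : List α) (R : Resid L) :
    v ∈ (residAut L).langFrom R ↔ v ∈ R.1 := by
  induction v generalizing R with
  | nil =>
    constructor
    · rintro ⟨p, hp, h⟩
      cases h
      exact hp
    · intro h
      exact ⟨R, h, rfl⟩
  | cons a v ih =>
    have h0 : a :: v ∈ (residAut L).langFrom R ↔
        ∃ q, (residAut L).step R a = some q ∧ v ∈ (residAut L).langFrom q := by
      simp only [IDFA.langFrom, Set.mem_ofPred_eq, IDFA.evalFrom_cons', Option.bind_eq_some_iff]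
      constructor
      · rintro ⟨p, hp, q, hq, h⟩; exact ⟨q, hq, p, hp, h⟩
      · rintro ⟨q, hq, p, hp, h⟩; exact ⟨p, hp, q, hq, h⟩
    rw [h0]
    simp only [ih]
    constructor
    · rintro ⟨q, hq, h⟩
      simp only [residAut] at hq
      split_ifs at hq
      cases hq
      exact h
    · intro h
      have hn : {v | a :: v ∈ R.1}.Nonempty := ⟨v, h⟩
      simp only [residAut]
      rw [if_pos hn]
      exact ⟨_, rfl, h⟩

theorem residAut_accepts {α : Type} (L : Set (List α)) : (residAut L).accepts = L := by
  ext v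
  exact residAut_langFrom L v (residAut L).start

theorem resid_finite {α : Type} (L : Set (List α)) (hL : IsRegularLang L) :
    Finite (Resid L) := by
  obtain ⟨σ, _, A, rfl⟩ := hL
  have : (Set.range fun o : Option σ => {v | ∃ q, o = some q ∧ v ∈ A.langFrom q}).Finite :=
    Set.finite_range _
  refine (this.subset (t := {R | ∃ w, R = {v | w ++ v ∈ A.accepts}}) ?_).to_subtype
  rintro _ ⟨w, rfl⟩
  refine ⟨A.evalFrom A.start w, ?_⟩
  ext v
  exact (A.mem_accepts_append w v).symm

theorem residAut_min {α σ : Type} [Finite σ] (A : IDFA α σ) (b : α) :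
    (residAut A.accepts).trCountOn b ≤ A.trCountOn b := by
  unfold IDFA.trCountOn
  rw [← Set.ncard_image_of_injective (f := Subtype.val) _ Subtype.val_injective]
  refine le_trans (Set.ncard_le_ncard ?_ (Set.toFinite _))
    (Set.ncard_image_le (f := A.langFrom) (Set.toFinite _))
  rintro _ ⟨⟨R, w, rfl⟩, hR, rfl⟩
  simp only [residAut, Set.mem_ofPred_eq] at hR
  split_ifs at hR with hn
  · obtain ⟨v, hv⟩ := hn
    obtain ⟨q, hq, p, hp, hv⟩ := (A.mem_accepts_append w (b :: v)).1 hv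
    refine ⟨q, ?_, ?_⟩
    · rw [IDFA.evalFrom_cons', Option.bind_eq_some_iff] at hv
      obtain ⟨r, hr, _⟩ := hv
      simp [hr]
    · ext u
      simp only [Set.mem_ofPred_eq]
      rw [A.mem_accepts_append, hq]
      simp
  · simp at hR

/-- for every regular language `L` over a finite alphabet,
`tc(L) = ∑_{b ∈ Σ} tc_b(L)`. -/
theorem tc_eq_sum_tcOn {α : Type} [Fintype α]
    (L : Set (List α)) (hL : IsRegularLang L) :
    tc L = ∑ b : α, tcOn L b := by
  have hf := resid_finite L hL
  have h1 : ∀ b, tcOn L b = (residAut L).trCountOn b := by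
    intro b
    apply le_antisymm
    · exact Nat.sInf_le ⟨_, hf, _, residAut_accepts L, rfl⟩
    · refine le_csInf ⟨_, _, hf, _, residAut_accepts L, rfl⟩ ?_
      rintro n ⟨σ, _, A, rfl, rfl⟩
      exact residAut_min A b
  have h2 : tc L = (residAut L).trCount := by
    apply le_antisymm
    · exact Nat.sInf_le ⟨_, hf, _, residAut_accepts L, rfl⟩
    · refine le_csInf ⟨_, _, hf, _, residAut_accepts L, rfl⟩ ?_
      rintro n ⟨σ, _, A, rfl, rfl⟩
      rw [IDFA.trCount_eq_sum, IDFA.trCount_eq_sum]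
      exact Finset.sum_le_sum fun b _ => residAut_min A b
  rw [h2, IDFA.trCount_eq_sum]
  exact Finset.sum_congr rfl fun b _ => (h1 b).symm
end

section
/- Let Σ be an alphabet with at least two symbols and let L₁, L₂ be regular languages over Σ. Then for every b ∈ Σ, tc_b(L₁ ∪ L₂) ≤ tc_b(L₁)·tc_b(L₂) + tc_b(L₁)·(1 + sc(L₂) − tc_b(L₂)) + tc_b(L₂)·(1 + sc(L₁) − tc_b(L₁)). -/
namespace IDFA

variable {α σ τ : Type}

def inAcc (A : IDFA α σ) (o : Option σ) (w : List α) : Prop :=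
  ∃ p ∈ A.accept, w.foldl (fun oq a => oq.bind fun p => A.step p a) o = some p

theorem mem_accepts (A : IDFA α σ) (w : List α) :
    w ∈ A.accepts ↔ A.inAcc (some A.start) w := Iff.rfl

theorem inAcc_cons (A : IDFA α σ) (o : Option σ) (a : α) (w : List α) :
    A.inAcc o (a :: w) ↔ A.inAcc (o.bind fun p => A.step p a) w := Iff.rfl

theorem inAcc_none (A : IDFA α σ) (w : List α) : ¬ A.inAcc none w := by
  induction w with
  | nil => rintro ⟨p, _, h⟩; simp at h
  | cons a w ih => rw [inAcc_cons]; exact ih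

theorem inAcc_append (A : IDFA α σ) (o : Option σ) (u w : List α) :
    A.inAcc o (u ++ w) ↔
      A.inAcc (u.foldl (fun oq a => oq.bind fun p => A.step p a) o) w := by
  simp [inAcc, List.foldl_append]

open Classical in
/-- product automaton -/
noncomputable def prodU (A : IDFA α σ) (B : IDFA α τ) : IDFA α (Option σ × Option τ) where
  step s a :=
    if (s.1.bind fun p => A.step p a) = none ∧ (s.2.bind fun p => B.step p a) = none then none
    else some (s.1.bind fun p => A.step p a, s.2.bind fun p => B.step p a)
  start := (some A.start, some B.start)
  accept := {s | (∃ p ∈ A.accept, s.1 = some p) ∨ ∃ p ∈ B.accept, s.2 = some p}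

theorem prodU_inAcc (A : IDFA α σ) (B : IDFA α τ) (w : List α) :
    ∀ p q, (A.prodU B).inAcc (some (p, q)) w ↔ A.inAcc p w ∨ B.inAcc q w := by
  induction w with
  | nil => intro p q; simp [inAcc, prodU]
  | cons a w ih =>
    intro p q
    rw [inAcc_cons, inAcc_cons, inAcc_cons, ← ih, Option.bind_some]
    simp only [prodU]
    split_ifs with h
    · rw [h.1, h.2]
      have := ih none none
      simp only [inAcc_none, or_self, iff_false] at this
      exact iff_of_false (inAcc_none _ _) this
    · rfl

theorem prodU_accepts (A : IDFA α σ) (B : IDFA α τ) :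
    (A.prodU B).accepts = A.accepts ∪ B.accepts := by
  ext w
  exact prodU_inAcc A B w _ _

theorem prodU_trCountOn [Finite σ] [Finite τ] (A : IDFA α σ) (B : IDFA α τ) (b : α) :
    (A.prodU B).trCountOn b ≤ A.trCountOn b * B.trCountOn b
      + A.trCountOn b * (1 + Nat.card τ - B.trCountOn b)
      + B.trCountOn b * (1 + Nat.card σ - A.trCountOn b) := by
  set S : Set (Option σ) := some '' {q | (A.step q b).isSome} with hS
  set T : Set (Option τ) := some '' {q | (B.step q b).isSome} with hT
  have cS : S.ncard = A.trCountOn b := Set.ncard_image_of_injective _ (Option.some_injective _)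
  have cT : T.ncard = B.trCountOn b := Set.ncard_image_of_injective _ (Option.some_injective _)
  have cS' : Sᶜ.ncard = 1 + Nat.card σ - A.trCountOn b := by
    rw [Set.ncard_compl, cS, Finite.card_option, add_comm]
  have cT' : Tᶜ.ncard = 1 + Nat.card τ - B.trCountOn b := by
    rw [Set.ncard_compl, cT, Finite.card_option, add_comm]
  have hsub : {q | ((A.prodU B).step q b).isSome} ⊆ (S ×ˢ T ∪ S ×ˢ Tᶜ) ∪ Sᶜ ×ˢ T := by
    rintro ⟨p, q⟩ h
    have h1 : p ∈ S ∨ q ∈ T := by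
      by_contra hc
      push Not at hc
      have e1 : (p.bind fun p => A.step p b) = none := by
        cases p with
        | none => rfl
        | some p => simpa [hS] using hc.1
      have e2 : (q.bind fun p => B.step p b) = none := by
        cases q with
        | none => rfl
        | some p => simpa [hT] using hc.2
      have e3 : (A.prodU B).step (p, q) b = none := if_pos ⟨e1, e2⟩
      simp [e3] at h
    simp only [Set.mem_union, Set.mem_prod, Set.mem_compl_iff]
    tauto
  calc _ ≤ _ := Set.ncard_le_ncard hsub (Set.toFinite _)
    _ ≤ _ := (Set.ncard_union_le _ _).trans (Nat.add_le_add_right (Set.ncard_union_le _ _) _)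
    _ = _ := by
      rw [Set.ncard_prod, Set.ncard_prod, Set.ncard_prod, cS, cT, cS', cT', mul_comm (_ - _)]

/-- states of the canonical automaton: nonempty left quotients, plus the language itself -/
abbrev CanSt (L : Set (List α)) : Type :=
  {K : Set (List α) // ∃ u : List α, K = {w | u ++ w ∈ L} ∧ (K.Nonempty ∨ u = [])}

theorem CanSt.next {L : Set (List α)} (K : CanSt L) (a : α) (h : {w | a :: w ∈ K.1}.Nonempty) :
    ∃ u : List α, {w | a :: w ∈ K.1} = {w | u ++ w ∈ L} ∧
      ({w | a :: w ∈ K.1}.Nonempty ∨ u = []) := by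
  obtain ⟨u, hK, -⟩ := K.2
  exact ⟨u ++ [a], by rw [hK]; simp, Or.inl h⟩

open Classical in
noncomputable def can (L : Set (List α)) : IDFA α (CanSt L) where
  step K a :=
    if h : {w | a :: w ∈ K.1}.Nonempty then
      some ⟨{w | a :: w ∈ K.1}, CanSt.next K a h⟩
    else none
  start := ⟨L, [], by simp, Or.inr rfl⟩
  accept := {K | [] ∈ K.1}

theorem can_inAcc (L : Set (List α)) (w : List α) :
    ∀ K, (can L).inAcc (some K) w ↔ w ∈ K.1 := by
  induction w with
  | nil => intro K; simp [inAcc, can]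
  | cons a w ih =>
    intro K
    rw [inAcc_cons, Option.bind_some]
    by_cases h : {w | a :: w ∈ K.1}.Nonempty
    · have : (can L).step K a = some ⟨{w | a :: w ∈ K.1}, CanSt.next K a h⟩ := dif_pos h
      rw [this]; exact ih _
    · have : (can L).step K a = none := dif_neg h
      rw [this]
      exact iff_of_false (inAcc_none _ _) fun hw => h ⟨w, hw⟩

theorem can_accepts (L : Set (List α)) : (can L).accepts = L := by
  ext w
  exact can_inAcc L w _

theorem can_map (B : IDFA α τ) : ∃ f : CanSt B.accepts → τ, Function.Injective f ∧
    ∀ q b, ((can B.accepts).step q b).isSome → (B.step (f q) b).isSome := by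
  have key : ∀ K : CanSt B.accepts, ∃ t : τ, ∀ w, w ∈ K.1 ↔ B.inAcc (some t) w := by
    rintro ⟨K, u, hK, h⟩
    have e : ∀ w, w ∈ K ↔
        B.inAcc (u.foldl (fun oq a => oq.bind fun p => B.step p a) (some B.start)) w := by
      intro w
      rw [← inAcc_append, hK]; rfl
    rcases ho : u.foldl (fun oq a => oq.bind fun p => B.step p a) (some B.start) with _ | t
    · exfalso
      rcases h with ⟨w, hw⟩ | rfl
      · rw [e, ho] at hw
        exact inAcc_none _ _ hw
      · simp at ho
    · exact ⟨t, fun w => by rw [e, ho]⟩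
  choose f hf using key
  refine ⟨f, ?_, ?_⟩
  · intro K K' h
    apply Subtype.ext
    ext w
    rw [hf, hf, h]
  · intro K b h
    have hne : {w | b :: w ∈ K.1}.Nonempty := by
      by_contra hc
      have : (can B.accepts).step K b = none := dif_neg hc
      simp [this] at h
    obtain ⟨w, hw⟩ := hne
    have hw' : B.inAcc (B.step (f K) b) w := (hf K _).1 hw
    cases hs : B.step (f K) b with
    | none => rw [hs] at hw'; exact (inAcc_none _ _ hw').elim
    | some _ => rfl

theorem exists_best {L : Set (List α)} (h : IsRegularLang L) (b : α) :
    ∃ (σ : Type) (_ : Finite σ) (A : IDFA α σ), A.accepts = L ∧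
      Nat.card σ = sc L ∧ A.trCountOn b = tcOn L b := by
  have hfin : Finite (CanSt L) := by
    obtain ⟨τ, _, B, rfl⟩ := h
    obtain ⟨f, hf, -⟩ := can_map B
    exact Finite.of_injective f hf
  refine ⟨CanSt L, hfin, can L, can_accepts L, ?_, ?_⟩
  · apply le_antisymm
    · refine le_csInf ⟨_, _, hfin, can L, can_accepts L, rfl⟩ ?_
      rintro n ⟨τ, _, B, rfl, rfl⟩
      obtain ⟨f, hf, -⟩ := can_map B
      exact Nat.card_le_card_of_injective f hf
    · exact Nat.sInf_le ⟨_, hfin, can L, can_accepts L, rfl⟩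
  · apply le_antisymm
    · refine le_csInf ⟨_, _, hfin, can L, can_accepts L, rfl⟩ ?_
      rintro n ⟨τ, _, B, rfl, rfl⟩
      obtain ⟨f, hf, hb⟩ := can_map B
      exact Set.ncard_le_ncard_of_injOn f (fun q hq => hb q b hq) hf.injOn (Set.toFinite _)
    · exact Nat.sInf_le ⟨_, hfin, can L, can_accepts L, rfl⟩

end IDFA

/-- upper bound for the `b`-transition complexity of union. -/
theorem tcOn_union_le {α : Type} [Finite α] (hcard : 2 ≤ Nat.card α)
    (L₁ L₂ : Set (List α)) (h₁ : IsRegularLang L₁) (h₂ : IsRegularLang L₂) :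
    ∀ b : α,
      tcOn (L₁ ∪ L₂) b ≤
        tcOn L₁ b * tcOn L₂ b
          + tcOn L₁ b * (1 + sc L₂ - tcOn L₂ b)
          + tcOn L₂ b * (1 + sc L₁ - tcOn L₁ b) := by
  intro b
  obtain ⟨σ, _, A, hA, cA, tA⟩ := IDFA.exists_best h₁ b
  obtain ⟨τ, _, B, hB, cB, tB⟩ := IDFA.exists_best h₂ b
  have h := IDFA.prodU_trCountOn A B b
  rw [cA, tA, cB, tB] at h
  refine le_trans (Nat.sInf_le ⟨_, inferInstance, A.prodU B, ?_, rfl⟩) h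
  rw [IDFA.prodU_accepts, hA, hB]
end

section
/- Let Σ be an alphabet with at least two symbols and fix b ∈ Σ. For any relatively prime integers n₁, n₂ ≥ 2 there exist regular languages L₁, L₂ over Σ with sc(Lᵢ) = nᵢ and tc_b(Lᵢ) = nᵢ − 1 (i = 1, 2) such that tc_b(L₁ ∪ L₂) = n₁n₂ + n₁ + n₂ − 3. -/
namespace IDFA

variable {α σ : Type}

/-- Acceptance of a word from a state. -/
def accFrom (A : IDFA α σ) (q : σ) (w : List α) : Prop :=
  ∃ s ∈ A.accept, A.evalFrom q w = some s

theorem accFrom_cons (A : IDFA α σ) (q : σ) (x : α) (w : List α) :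
    A.accFrom q (x :: w) ↔ ∃ q', A.step q x = some q' ∧ A.accFrom q' w := by
  unfold accFrom evalFrom
  cases h : A.step q x with
  | none => simp [h, foldl_none']
  | some q' => simp [h]

theorem mem_append (A : IDFA α σ) (u v : List α) :
    u ++ v ∈ A.accepts ↔ ∃ q, A.eval u = some q ∧ A.accFrom q v := by
  unfold accepts accFrom eval evalFrom
  cases h : u.foldl (fun oq a => oq.bind fun p => A.step p a) (some A.start) with
  | none => simp [h, foldl_none']
  | some q' => simp [h]

/-- Transfer map between an automaton with a good set of states and another
automaton for the same language. -/
theorem transfer {τ : Type} (A : IDFA α σ) (B : IDFA α τ) (hL : B.accepts = A.accepts)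
    (S : Set σ)
    (hreach : ∀ q ∈ S, ∃ w, A.eval w = some q)
    (hdist : ∀ q ∈ S, ∀ q' ∈ S, (∀ v, A.accFrom q v ↔ A.accFrom q' v) → q = q')
    (hprod : ∀ q ∈ S, ∃ v, A.accFrom q v) :
    ∃ f : S → τ, Function.Injective f ∧ ∀ q v, B.accFrom (f q) v ↔ A.accFrom q v := by
  have key : ∀ q : S, ∃ t : τ, ∀ v, B.accFrom t v ↔ A.accFrom q v := by
    rintro ⟨q, hq⟩
    obtain ⟨w, hw⟩ := hreach q hq
    obtain ⟨v, hv⟩ := hprod q hq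
    have h1 : w ++ v ∈ B.accepts := by
      rw [hL, mem_append]; exact ⟨q, hw, hv⟩
    obtain ⟨t, ht, -⟩ := (mem_append _ _ _).1 h1
    refine ⟨t, fun v => ?_⟩
    have h2 : w ++ v ∈ B.accepts ↔ w ++ v ∈ A.accepts := by rw [hL]
    rw [mem_append, mem_append, ht, hw] at h2
    simpa using h2
  choose f hf using key
  refine ⟨f, ?_, hf⟩
  intro q q' h
  apply Subtype.ext
  apply hdist _ q.2 _ q'.2
  intro v
  rw [← hf, ← hf, h]

theorem tcOn_eq [Finite σ] (A : IDFA α σ) (b : α)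
    (hreach : ∀ q, (A.step q b).isSome → ∃ w, A.eval w = some q)
    (hdist : ∀ q q', (∀ v, A.accFrom q v ↔ A.accFrom q' v) → q = q')
    (hprod : ∀ q, (A.step q b).isSome → ∃ v, A.accFrom q (b :: v)) :
    tcOn A.accepts b = A.trCountOn b := by
  apply le_antisymm
  · exact Nat.sInf_le ⟨σ, inferInstance, A, rfl, rfl⟩
  · unfold tcOn
    refine le_csInf ⟨_, ⟨σ, inferInstance, A, rfl, rfl⟩⟩ ?_
    rintro n ⟨τ, _, B, hB, rfl⟩
    obtain ⟨f, hf, hfv⟩ := transfer A B hB {q | (A.step q b).isSome} hreach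
      (fun q _ q' _ => hdist q q') (fun q hq => (hprod q hq).imp' (b :: ·) fun _ h => h)
    unfold trCountOn
    rw [← Nat.card_coe_set_eq, ← Nat.card_coe_set_eq]
    refine Nat.card_le_card_of_injective (fun q => ⟨f q, ?_⟩) ?_
    · obtain ⟨v, hv⟩ := hprod q q.2
      obtain ⟨q', h, -⟩ := (accFrom_cons _ _ _ _).1 ((hfv _ _).2 hv)
      simp [h]
    · intro q q' h
      exact hf (congrArg Subtype.val h)

theorem sc_eq [Finite σ] (A : IDFA α σ)
    (hreach : ∀ q, ∃ w, A.eval w = some q)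
    (hdist : ∀ q q', (∀ v, A.accFrom q v ↔ A.accFrom q' v) → q = q')
    (hprod : ∀ q, ∃ v, A.accFrom q v) :
    sc A.accepts = Nat.card σ := by
  apply le_antisymm
  · exact Nat.sInf_le ⟨σ, inferInstance, A, rfl, rfl⟩
  · unfold sc
    refine le_csInf ⟨_, ⟨σ, inferInstance, A, rfl, rfl⟩⟩ ?_
    rintro n ⟨τ, _, B, hB, rfl⟩
    obtain ⟨f, hf, hfv⟩ := transfer A B hB Set.univ (fun q _ => hreach q)
      (fun q _ q' _ => hdist q q') (fun q _ => hprod q)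
    rw [← Nat.card_univ (α := σ)]
    exact Nat.card_le_card_of_injective f hf

end IDFA

namespace UnionLB

open IDFA

variable {α : Type}

open Classical in
/-- The cyclic automaton. -/
noncomputable def cyc (b : α) (n : ℕ) : IDFA α (ZMod n) where
  step q x := if x = b then (if q = 0 then none else some q) else some (q + 1)
  start := 0
  accept := {0}

/-- Completed run. -/
noncomputable def run (b : α) (n : ℕ) (o : Option (ZMod n)) (w : List α) : Option (ZMod n) :=
  w.foldl (fun oq a => oq.bind fun p => (cyc b n).step p a) o

theorem run_none (b : α) (n : ℕ) (w : List α) : run b n none w = none := foldl_none' _ w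

theorem run_append (b : α) (n : ℕ) (o) (u v : List α) :
    run b n o (u ++ v) = run b n (run b n o u) v := by simp [run]

theorem run_cons (b : α) (n : ℕ) (o) (x) (v : List α) :
    run b n o (x :: v) = run b n (run b n o [x]) v := by simp [run]

theorem run_rep {a b : α} (hab : a ≠ b) (n : ℕ) (p : ZMod n) (k : ℕ) :
    run b n (some p) (List.replicate k a) = some (p + k) := by
  induction k generalizing p with
  | zero => simp [run]
  | succ k ih =>
    rw [List.replicate_succ, run_cons]
    have : run b n (some p) [a] = some (p + 1) := by simp [run, cyc, hab]
    rw [this, ih]; push_cast; ring_nf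

theorem run_b_zero (b : α) (n : ℕ) : run b n (some 0) [b] = none := by simp [run, cyc]

theorem run_b_ne (b : α) (n : ℕ) (p : ZMod n) (h : p ≠ 0) :
    run b n (some p) [b] = some p := by simp [run, cyc, h]

theorem cyc_eval (b : α) (n : ℕ) (w : List α) : (cyc b n).eval w = run b n (some 0) w := rfl

theorem cyc_acc (b : α) (n : ℕ) (q) (w : List α) :
    (cyc b n).accFrom q w ↔ run b n (some q) w = some 0 := by
  simp [accFrom, cyc, evalFrom, run]

theorem mem_cyc (b : α) (n : ℕ) (w : List α) :
    w ∈ (cyc b n).accepts ↔ run b n (some 0) w = some 0 := cyc_acc b n 0 w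

theorem natrep (n : ℕ) [NeZero n] (p : ZMod n) : ∃ k : ℕ, (k : ZMod n) = p :=
  ⟨p.val, ZMod.natCast_zmod_val p⟩

section single
variable {a b : α} (hab : a ≠ b) (n : ℕ) [NeZero n]
include hab

theorem cyc_reach (q) : ∃ w, (cyc b n).eval w = some q := by
  obtain ⟨k, hk⟩ := natrep n q
  exact ⟨List.replicate k a, by rw [cyc_eval, run_rep hab, hk, zero_add]⟩

theorem cyc_prod (q) : ∃ w, (cyc b n).accFrom q w := by
  obtain ⟨k, hk⟩ := natrep n (-q)
  exact ⟨List.replicate k a, by rw [cyc_acc, run_rep hab, hk, add_neg_cancel]⟩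

theorem cyc_dist (q q') (h : ∀ v, (cyc b n).accFrom q v ↔ (cyc b n).accFrom q' v) :
    q = q' := by
  obtain ⟨k, hk⟩ := natrep n (-q)
  have := (h (List.replicate k a)).1 (by rw [cyc_acc, run_rep hab, hk, add_neg_cancel])
  rw [cyc_acc, run_rep hab, hk, Option.some_inj] at this
  exact (add_neg_eq_zero.1 this).symm

theorem cyc_sc : sc (cyc b n).accepts = n := by
  rw [sc_eq _ (cyc_reach hab n) (cyc_dist hab n) (cyc_prod hab n), Nat.card_zmod]

theorem cyc_tc : tcOn (cyc b n).accepts b = n - 1 := by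
  rw [tcOn_eq _ _ (fun q _ => cyc_reach hab n q) (cyc_dist hab n)]
  · have : {q : ZMod n | ((cyc b n).step q b).isSome} = {0}ᶜ := by
      ext q
      by_cases h : q = 0 <;> simp [cyc, h]
    rw [trCountOn, this, Set.ncard_compl, Set.ncard_singleton, Nat.card_zmod]
  · intro q hq
    obtain ⟨v, hv⟩ := cyc_prod hab n q
    refine ⟨v, (accFrom_cons _ _ _ _).2 ⟨q, ?_, hv⟩⟩
    by_cases h : q = 0
    · simp [cyc, h] at hq
    · simp [cyc, h]

end single

open Classical in
/-- The product automaton. -/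
noncomputable def pr (b : α) (n m : ℕ) : IDFA α (Option (ZMod n) × Option (ZMod m)) where
  step q x := if run b n q.1 [x] = none ∧ run b m q.2 [x] = none then none
    else some (run b n q.1 [x], run b m q.2 [x])
  start := (some 0, some 0)
  accept := {q | q.1 = some 0 ∨ q.2 = some 0}

theorem pr_acc (b : α) (n m : ℕ) (q) (w : List α) :
    (pr b n m).accFrom q w ↔ run b n q.1 w = some 0 ∨ run b m q.2 w = some 0 := by
  induction w generalizing q with
  | nil => simp [accFrom, evalFrom, run, pr]
  | cons x w ih =>
    rw [accFrom_cons, run_cons b n, run_cons b m]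
    by_cases h : run b n q.1 [x] = none ∧ run b m q.2 [x] = none
    · have : (pr b n m).step q x = none := by simp [pr, h]
      rw [this, h.1, h.2, run_none, run_none]; simp
    · have : (pr b n m).step q x = some (run b n q.1 [x], run b m q.2 [x]) := by
        simp only [pr, if_neg h]
      rw [this]; simp [ih]

theorem pr_evalFrom (b : α) (n m : ℕ) (q) (w : List α)
    (h : ¬ (run b n q.1 w = none ∧ run b m q.2 w = none)) :
    (pr b n m).evalFrom q w = some (run b n q.1 w, run b m q.2 w) := by
  induction w generalizing q with
  | nil => rfl
  | cons x w ih =>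
    rw [run_cons b n, run_cons b m] at h ⊢
    have h' : ¬ (run b n q.1 [x] = none ∧ run b m q.2 [x] = none) := by
      rintro ⟨h1, h2⟩
      rw [h1, h2, run_none, run_none] at h
      simp at h
    have : (pr b n m).step q x = some (run b n q.1 [x], run b m q.2 [x]) := by
      simp only [pr, if_neg h']
    rw [← ih (run b n q.1 [x], run b m q.2 [x]) h]
    simp [evalFrom, this]

theorem pr_reach_of (b : α) (n m : ℕ) (p q) (w : List α) (h1 : run b n (some 0) w = p)
    (h2 : run b m (some 0) w = q) (h : ¬ (p = none ∧ q = none)) :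
    (pr b n m).eval w = some (p, q) := by
  subst h1 h2
  exact pr_evalFrom b n m (some 0, some 0) w h

theorem pr_accepts (b : α) (n m : ℕ) :
    (pr b n m).accepts = (cyc b n).accepts ∪ (cyc b m).accepts := by
  ext w
  rw [Set.mem_union, mem_cyc, mem_cyc]
  exact pr_acc b n m (some 0, some 0) w

theorem crt {n m : ℕ} [NeZero n] [NeZero m] (h : Nat.Coprime n m) (p : ZMod n) (q : ZMod m) :
    ∃ k : ℕ, (k : ZMod n) = p ∧ (k : ZMod m) = q := by
  obtain ⟨i, rfl⟩ := natrep n p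
  obtain ⟨j, rfl⟩ := natrep m q
  obtain ⟨k, h1, h2⟩ := Nat.chineseRemainder h i j
  exact ⟨k, (ZMod.natCast_eq_natCast_iff _ _ _).2 h1, (ZMod.natCast_eq_natCast_iff _ _ _).2 h2⟩

theorem opt_sep {X Y : Type} [Nontrivial Y] (p p' : Option X) (q q' : Option Y)
    (h : ∀ x y, (p = some x ∨ q = some y) ↔ (p' = some x ∨ q' = some y)) : p = p' := by
  obtain ⟨y, y', hy⟩ := exists_pair_ne Y
  have e : ∀ (r : Option Y), ¬ (r = some y ∧ r = some y') := by
    rintro r ⟨h1, h2⟩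
    exact hy (Option.some_inj.1 (h1.symm.trans h2))
  apply Option.ext
  intro x
  have h1 := h x y
  have h2 := h x y'
  have h3 := e q
  have h4 := e q'
  tauto

section prod
variable {a b : α} (hab : a ≠ b) (n m : ℕ) [NeZero n] [NeZero m]
  [Nontrivial (ZMod n)] [Nontrivial (ZMod m)] (hc : Nat.Coprime n m)
include hab hc

theorem pr_reach (p q) (h : ¬ (p = none ∧ q = none)) :
    ∃ w, (pr b n m).eval w = some (p, q) := by
  rcases p with _ | p <;> rcases q with _ | q
  · simp at h
  · obtain ⟨k, h1, h2⟩ := crt hc 0 1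
    obtain ⟨l, hl⟩ := natrep m (q - 1)
    refine ⟨List.replicate k a ++ ([b] ++ List.replicate l a), pr_reach_of _ _ _ _ _ _ ?_ ?_ h⟩
    · rw [run_append, run_append, run_rep hab, h1, zero_add, run_b_zero, run_none]
    · rw [run_append, run_append, run_rep hab, h2, zero_add, run_b_ne _ _ _ one_ne_zero,
        run_rep hab, hl, add_sub_cancel]
  · obtain ⟨k, h1, h2⟩ := crt hc 1 0
    obtain ⟨l, hl⟩ := natrep n (p - 1)
    refine ⟨List.replicate k a ++ ([b] ++ List.replicate l a), pr_reach_of _ _ _ _ _ _ ?_ ?_ h⟩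
    · rw [run_append, run_append, run_rep hab, h1, zero_add, run_b_ne _ _ _ one_ne_zero,
        run_rep hab, hl, add_sub_cancel]
    · rw [run_append, run_append, run_rep hab, h2, zero_add, run_b_zero, run_none]
  · obtain ⟨k, h1, h2⟩ := crt hc p q
    refine ⟨List.replicate k a, pr_reach_of _ _ _ _ _ _ ?_ ?_ h⟩
    · rw [run_rep hab, h1, zero_add]
    · rw [run_rep hab, h2, zero_add]

omit [NeZero n] [NeZero m] [Nontrivial (ZMod n)] [Nontrivial (ZMod m)] hc in
theorem run_rep' (p : Option (ZMod n)) (x : ZMod n) (k : ℕ) (hk : (k : ZMod n) = -x) :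
    run b n p (List.replicate k a) = some 0 ↔ p = some x := by
  rcases p with _ | p
  · simp [run_none]
  · rw [run_rep hab, hk, Option.some_inj, Option.some_inj, add_neg_eq_zero]

theorem pr_dist (q q') (h : ∀ v, (pr b n m).accFrom q v ↔ (pr b n m).accFrom q' v) :
    q = q' := by
  have key : ∀ x y, (q.1 = some x ∨ q.2 = some y) ↔ (q'.1 = some x ∨ q'.2 = some y) := by
    intro x y
    obtain ⟨k, h1, h2⟩ := crt hc (-x) (-y)
    have := h (List.replicate k a)
    rwa [pr_acc, pr_acc, run_rep' hab n _ _ _ h1, run_rep' hab m _ _ _ h2,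
      run_rep' hab n _ _ _ h1, run_rep' hab m _ _ _ h2] at this
  apply Prod.ext
  · exact opt_sep _ _ _ _ key
  · exact opt_sep q.2 q'.2 q.1 q'.1 fun y x => by rw [or_comm, key, or_comm]

omit [NeZero n] [NeZero m] [Nontrivial (ZMod n)] [Nontrivial (ZMod m)] hc hab in
theorem run_b_none (p : Option (ZMod n)) : run b n p [b] = none ↔ p = none ∨ p = some 0 := by
  rcases p with _ | p
  · simp [run_none]
  · by_cases h : p = 0
    · subst h; simp [run_b_zero]
    · simp [run_b_ne _ _ _ h, h]

omit [NeZero n] [NeZero m] [Nontrivial (ZMod n)] [Nontrivial (ZMod m)] hc hab in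
theorem pr_step_b (q) : ((pr b n m).step q b).isSome ↔
    ¬ (run b n q.1 [b] = none ∧ run b m q.2 [b] = none) := by
  by_cases h : run b n q.1 [b] = none ∧ run b m q.2 [b] = none
  · simp only [pr, if_pos h]; simp [h]
  · simp only [pr, if_neg h]; simp [h]

omit [NeZero m] [Nontrivial (ZMod n)] [Nontrivial (ZMod m)] hc in
theorem run_prod (o : Option (ZMod n)) (h : run b n o [b] ≠ none) :
    ∃ v, run b n o (b :: v) = some 0 := by
  obtain ⟨p, hp⟩ := Option.ne_none_iff_exists'.1 h
  obtain ⟨k, hk⟩ := natrep n (-p)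
  exact ⟨List.replicate k a, by rw [run_cons, hp, run_rep hab, hk, add_neg_cancel]⟩

theorem pr_tc : tcOn ((cyc b n).accepts ∪ (cyc b m).accepts) b = n * m + n + m - 3 := by
  rw [← pr_accepts, tcOn_eq _ _ _ (pr_dist hab n m hc)]
  · have : {q | ((pr b n m).step q b).isSome} =
        (({none, some 0} : Set (Option (ZMod n))) ×ˢ ({none, some 0} : Set (Option (ZMod m))))ᶜ := by
      ext q
      rw [Set.mem_ofPred_eq, pr_step_b, run_b_none, run_b_none]
      rfl
    rw [trCountOn, this, Set.ncard_compl, Set.ncard_prod, Set.ncard_pair (by simp),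
      Set.ncard_pair (by simp), Nat.card_prod, Finite.card_option, Finite.card_option,
      Nat.card_zmod, Nat.card_zmod]
    have : (n + 1) * (m + 1) = n * m + n + m + 1 := by ring
    omega
  · intro q h
    rw [pr_step_b, not_and_or] at h
    rcases h with h | h
    · obtain ⟨v, hv⟩ := run_prod hab n _ h
      exact ⟨v, (pr_acc _ _ _ _ _).2 (Or.inl hv)⟩
    · obtain ⟨v, hv⟩ := run_prod hab m _ h
      exact ⟨v, (pr_acc _ _ _ _ _).2 (Or.inr hv)⟩
  · rintro ⟨p, q⟩ h
    apply pr_reach hab n m hc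
    rintro ⟨rfl, rfl⟩
    rw [pr_step_b] at h
    simp [run_none] at h

end prod

end UnionLB

/-- for relatively prime `n₁, n₂ ≥ 2` there are languages with
`sc(Lᵢ) = nᵢ`, `tc_b(Lᵢ) = nᵢ - 1` and `tc_b(L₁ ∪ L₂) = n₁n₂ + n₁ + n₂ - 3`. -/
theorem tcOn_union_max_lower_bound {α : Type} [Finite α] (hcard : 2 ≤ Nat.card α) (b : α)
    (n₁ n₂ : ℕ) (hn₁ : 2 ≤ n₁) (hn₂ : 2 ≤ n₂) (hcop : Nat.Coprime n₁ n₂) :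
    ∃ L₁ L₂ : Set (List α), IsRegularLang L₁ ∧ IsRegularLang L₂ ∧
      sc L₁ = n₁ ∧ sc L₂ = n₂ ∧ tcOn L₁ b = n₁ - 1 ∧ tcOn L₂ b = n₂ - 1 ∧
      tcOn (L₁ ∪ L₂) b = n₁ * n₂ + n₁ + n₂ - 3 := by
  have : Nontrivial α := Finite.one_lt_card_iff_nontrivial.1 hcard
  obtain ⟨a, hab⟩ := exists_ne b
  have : NeZero n₁ := ⟨by omega⟩
  have : NeZero n₂ := ⟨by omega⟩
  have : Fact (1 < n₁) := ⟨hn₁⟩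
  have : Fact (1 < n₂) := ⟨hn₂⟩
  exact ⟨(UnionLB.cyc b n₁).accepts, (UnionLB.cyc b n₂).accepts,
    ⟨_, inferInstance, _, rfl⟩, ⟨_, inferInstance, _, rfl⟩,
    UnionLB.cyc_sc hab n₁, UnionLB.cyc_sc hab n₂, UnionLB.cyc_tc hab n₁, UnionLB.cyc_tc hab n₂,
    UnionLB.pr_tc hab n₁ n₂ hcop⟩
end

section
/- Let A₁ and A₂ be connected incomplete DFAs over the same alphabet Σ (every state is reachable from the start state), and let B be the product DFA for L(A₁) ∪ L(A₂) obtained from the cross-product construction for incomplete DFAs (states are pairs from Q₁' × Q₂', where Qᵢ' adds a dead state d to Qᵢ when Aᵢ has some undefined transition; a transition on b is defined at (q₁', q₂') whenever at least one component has a defined b-transition, the other component going to d if its b-transition is undefined). Then #tr(B) ≤ 2·(#tr(A₁)·#tr(A₂) + #tr(A₁) + #tr(A₂)). -/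
/-- The cross-product construction for the union of two incomplete DFAs: the
state set is `Q₁' × Q₂'` where `Qᵢ' = Qᵢ ∪ {d}` (`d = none` is the dead state);
a `b`-transition is defined at a pair whenever at least one component has a
defined `b`-transition, the other component going to the dead state `d` if its
`b`-transition is undefined. -/
def IDFA.unionProd {α σ₁ σ₂ : Type} (A₁ : IDFA α σ₁) (A₂ : IDFA α σ₂) :
    IDFA α (Option σ₁ × Option σ₂) where
  step p b :=
    let r₁ := p.1.bind fun q => A₁.step q b
    let r₂ := p.2.bind fun q => A₂.step q b
    if r₁.isSome ∨ r₂.isSome then some (r₁, r₂) else none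
  start := (some A₁.start, some A₂.start)
  accept := {p | (∃ q ∈ A₁.accept, p.1 = some q) ∨ ∃ q ∈ A₂.accept, p.2 = some q}

theorem IDFA.card_le_trCount {α σ : Type} [Finite α] [Finite σ] (A : IDFA α σ)
    (h : A.Connected) : Nat.card σ ≤ A.trCount + 1 := by
  classical
  let T : Set (σ × α) := {p : σ × α | (A.step p.1 p.2).isSome}
  let f : Option T → σ := fun o => match o with
    | none => A.start
    | some t => (A.step t.1.1 t.1.2).get t.2
  have hf : Function.Surjective f := by
    intro q
    obtain ⟨w, hw⟩ := h q
    rcases List.eq_nil_or_concat w with rfl | ⟨l, a, rfl⟩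
    · refine ⟨none, ?_⟩
      simpa [IDFA.evalFrom] using hw
    · simp only [IDFA.evalFrom, List.concat_eq_append, List.foldl_append, List.foldl_cons,
        List.foldl_nil] at hw
      obtain ⟨p, -, hp⟩ := Option.bind_eq_some_iff.mp hw
      refine ⟨some ⟨(p, a), ?_⟩, ?_⟩
      · simp [T, hp]
      · simp [f, hp]
  have := Nat.card_le_card_of_surjective f hf
  rw [Finite.card_option] at this
  simpa [IDFA.trCount, T, Nat.card_coe_set_eq] using this

/-- for connected incomplete DFAs `A₁, A₂`, the product automaton
`B` for `L(A₁) ∪ L(A₂)` satisfies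
`#tr(B) ≤ 2·(#tr(A₁)·#tr(A₂) + #tr(A₁) + #tr(A₂))`. -/
theorem trCount_unionProd_le {α : Type} [Finite α] {σ₁ σ₂ : Type} [Finite σ₁] [Finite σ₂]
    (A₁ : IDFA α σ₁) (A₂ : IDFA α σ₂) (h₁ : A₁.Connected) (h₂ : A₂.Connected) :
    (A₁.unionProd A₂).trCount ≤
      2 * (A₁.trCount * A₂.trCount + A₁.trCount + A₂.trCount) := by
  classical
  have n₁ := A₁.card_le_trCount h₁
  have n₂ := A₂.card_le_trCount h₂
  let T₁ : Set (σ₁ × α) := {p | (A₁.step p.1 p.2).isSome}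
  let T₂ : Set (σ₂ × α) := {p | (A₂.step p.1 p.2).isSome}
  let g₁ : (σ₁ × α) × Option σ₂ → (Option σ₁ × Option σ₂) × α :=
    fun x => ((some x.1.1, x.2), x.1.2)
  let g₂ : (σ₂ × α) × Option σ₁ → (Option σ₁ × Option σ₂) × α :=
    fun x => ((x.2, some x.1.1), x.1.2)
  have hsub : {p : (Option σ₁ × Option σ₂) × α | ((A₁.unionProd A₂).step p.1 p.2).isSome} ⊆
      g₁ '' (T₁ ×ˢ Set.univ) ∪ g₂ '' (T₂ ×ˢ Set.univ) := by
    rintro ⟨⟨p₁, p₂⟩, b⟩ hp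
    simp only [Set.mem_setOf_eq, IDFA.unionProd] at hp
    split_ifs at hp with hc
    · rcases hc with hc | hc
      · left
        cases p₁ with
        | none => simp at hc
        | some q => exact ⟨((q, b), p₂), ⟨by simpa [T₁] using hc, trivial⟩, rfl⟩
      · right
        cases p₂ with
        | none => simp at hc
        | some q => exact ⟨((q, b), p₁), ⟨by simpa [T₂] using hc, trivial⟩, rfl⟩
    · simp at hp
  have c₁ : (g₁ '' (T₁ ×ˢ Set.univ)).ncard ≤ A₁.trCount * (Nat.card σ₂ + 1) := by
    refine (Set.ncard_image_le (Set.toFinite _)).trans ?_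
    rw [Set.ncard_prod, Set.ncard_univ, Finite.card_option]
    rfl
  have c₂ : (g₂ '' (T₂ ×ˢ Set.univ)).ncard ≤ A₂.trCount * (Nat.card σ₁ + 1) := by
    refine (Set.ncard_image_le (Set.toFinite _)).trans ?_
    rw [Set.ncard_prod, Set.ncard_univ, Finite.card_option]
    rfl
  have key : (A₁.unionProd A₂).trCount ≤
      A₁.trCount * (Nat.card σ₂ + 1) + A₂.trCount * (Nat.card σ₁ + 1) :=
    ((Set.ncard_le_ncard hsub (Set.toFinite _)).trans (Set.ncard_union_le _ _)).trans
      (Nat.add_le_add c₁ c₂)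
  have m₁ := Nat.mul_le_mul_left A₁.trCount (Nat.succ_le_succ n₂)
  have m₂ := Nat.mul_le_mul_left A₂.trCount (Nat.succ_le_succ n₁)
  simp only [Nat.succ_eq_add_one] at m₁ m₂
  nlinarith
end

section
/- For all regular languages L₁ and L₂ over a finite alphabet Σ, tc(L₁ ∪ L₂) ≤ 2·(tc(L₁)·tc(L₂) + tc(L₁) + tc(L₂)). -/
namespace IDFA

variable {α σ τ : Type}

/-- Optional states that are none, the start, or a target of a transition. -/
def good (A : IDFA α σ) : Set (Option σ) :=
  insert none (insert (some A.start) ((fun p : σ × α => A.step p.1 p.2) '' {p | (A.step p.1 p.2).isSome}))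

theorem good_ncard [Finite α] [Finite σ] (A : IDFA α σ) : A.good.ncard ≤ A.trCount + 2 := by
  unfold good trCount
  have h1 := Set.ncard_insert_le (none : Option σ) (insert (some A.start) ((fun p : σ × α => A.step p.1 p.2) '' {p | (A.step p.1 p.2).isSome}))
  have h2 := Set.ncard_insert_le (some A.start) ((fun p : σ × α => A.step p.1 p.2) '' {p | (A.step p.1 p.2).isSome})
  have h3 := Set.ncard_image_le (f := fun p : σ × α => A.step p.1 p.2) (Set.toFinite {p : σ × α | (A.step p.1 p.2).isSome})
  omega

theorem eval_append (A : IDFA α σ) (w : List α) (a : α) :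
    A.eval (w ++ [a]) = (A.eval w).bind fun p => A.step p a := by
  simp [eval, evalFrom]

theorem eval_good (A : IDFA α σ) (w : List α) : A.eval w ∈ A.good := by
  induction w using List.reverseRecOn with
  | nil => simp [eval, evalFrom, good]
  | append_singleton w a ih =>
    rw [eval_append]
    cases h : A.eval w with
    | none => simp [good]
    | some p =>
      cases h' : A.step p a with
      | none => simp [good, h']
      | some q =>
        refine Or.inr (Or.inr ⟨(p, a), ?_, ?_⟩) <;> simp [h']

open Classical in
/-- The trimmed union automaton. -/
noncomputable def union (A : IDFA α σ) (B : IDFA α τ) : IDFA α (Option σ × Option τ) where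
  step s a :=
    if s.1 ∈ A.good ∧ s.2 ∈ B.good ∧
      ((s.1.bind fun p => A.step p a).isSome ∨ (s.2.bind fun p => B.step p a).isSome)
    then some (s.1.bind fun p => A.step p a, s.2.bind fun p => B.step p a) else none
  start := (some A.start, some B.start)
  accept := {s | (∃ q ∈ A.accept, s.1 = some q) ∨ (∃ q ∈ B.accept, s.2 = some q)}

theorem union_eval (A : IDFA α σ) (B : IDFA α τ) (w : List α) :
    (A.union B).eval w = some (A.eval w, B.eval w) ∨
    ((A.union B).eval w = none ∧ A.eval w = none ∧ B.eval w = none) := by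
  induction w using List.reverseRecOn with
  | nil => left; rfl
  | append_singleton w a ih =>
    have hA := A.eval_good w
    have hB := B.eval_good w
    simp only [eval_append]
    rcases ih with h | ⟨h, h1, h2⟩
    · rw [h]
      simp only [union, Option.bind_some, hA, hB, true_and]
      split_ifs with hc
      · left; rfl
      · right
        simpa [not_or] using hc
    · right; simp [h, h1, h2]

theorem union_accepts (A : IDFA α σ) (B : IDFA α τ) :
    (A.union B).accepts = A.accepts ∪ B.accepts := by
  ext w
  simp only [accepts, Set.mem_union, Set.mem_setOf_eq]
  rcases A.union_eval B w with h | ⟨h, h1, h2⟩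
  · rw [h]
    simp [union]
  · simp [h, h1, h2]

theorem union_trCount [Finite α] [Finite σ] [Finite τ] (A : IDFA α σ) (B : IDFA α τ) :
    (A.union B).trCount ≤ A.trCount * B.good.ncard + B.trCount * A.good.ncard := by
  let f : (σ × α) × Option τ → (Option σ × Option τ) × α := fun x => ((some x.1.1, x.2), x.1.2)
  let g : (τ × α) × Option σ → (Option σ × Option τ) × α := fun x => ((x.2, some x.1.1), x.1.2)
  let S := {p : σ × α | (A.step p.1 p.2).isSome} ×ˢ B.good
  let T := {p : τ × α | (B.step p.1 p.2).isSome} ×ˢ A.good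
  have hsub : {p : (Option σ × Option τ) × α | ((A.union B).step p.1 p.2).isSome} ⊆ f '' S ∪ g '' T := by
    rintro ⟨⟨x, y⟩, a⟩ h
    simp only [union, Set.mem_setOf_eq] at h
    split_ifs at h with hc
    · obtain ⟨h1, h2, h3⟩ := hc
      rcases h3 with h3 | h3
      · left
        cases x with
        | none => simp at h3
        | some p => exact ⟨((p, a), y), ⟨by simpa using h3, h2⟩, rfl⟩
      · right
        cases y with
        | none => simp at h3
        | some p => exact ⟨((p, a), x), ⟨by simpa using h3, h1⟩, rfl⟩
    · simp at h
  calc (A.union B).trCount ≤ (f '' S ∪ g '' T).ncard := Set.ncard_le_ncard hsub (Set.toFinite _)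
    _ ≤ (f '' S).ncard + (g '' T).ncard := Set.ncard_union_le _ _
    _ ≤ S.ncard + T.ncard := 
      add_le_add (Set.ncard_image_le (Set.toFinite _)) (Set.ncard_image_le (Set.toFinite _))
    _ = _ := by simp only [S, T, Set.ncard_prod, trCount]

end IDFA

theorem exists_tc {α : Type} {L : Set (List α)} (h : IsRegularLang L) :
    ∃ (σ : Type) (_ : Finite σ) (A : IDFA α σ), A.accepts = L ∧ A.trCount = tc L := by
  obtain ⟨σ, hf, A, hA⟩ := h
  exact Nat.sInf_mem (s := {n | ∃ (σ : Type) (_ : Finite σ) (A : IDFA α σ), A.accepts = L ∧ A.trCount = n})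
    ⟨_, σ, hf, A, hA, rfl⟩

/-- for all regular languages,
`tc(L₁ ∪ L₂) ≤ 2·(tc(L₁)·tc(L₂) + tc(L₁) + tc(L₂))`. -/
theorem tc_union_le {α : Type} [Finite α]
    (L₁ L₂ : Set (List α)) (h₁ : IsRegularLang L₁) (h₂ : IsRegularLang L₂) :
    tc (L₁ ∪ L₂) ≤ 2 * (tc L₁ * tc L₂ + tc L₁ + tc L₂) := by
  obtain ⟨σ, hσ, A, hA, hA'⟩ := exists_tc h₁
  obtain ⟨τ, hτ, B, hB, hB'⟩ := exists_tc h₂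
  have h : tc (L₁ ∪ L₂) ≤ (A.union B).trCount :=
    Nat.sInf_le ⟨_, inferInstance, A.union B, by rw [A.union_accepts B, hA, hB], rfl⟩
  have h2 := A.union_trCount B
  have h3 := Nat.mul_le_mul_left A.trCount B.good_ncard
  have h4 := Nat.mul_le_mul_left B.trCount A.good_ncard
  rw [← hA', ← hB']
  nlinarith
end

section
/- For any relatively prime integers n₁ ≥ 3 and n₂ ≥ 2, there exist regular languages L₁, L₂ over the unary alphabet {b} with tc(Lᵢ) = nᵢ (i = 1, 2) such that tc(L₁ ∪ L₂) = n₁·n₂. -/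
theorem aux_eval_append {σ : Type} (A : IDFA Unit σ) (u v : List Unit) :
    A.eval (u ++ v) = v.foldl (fun oq a => oq.bind fun p => A.step p a) (A.eval u) := by
  simp [IDFA.eval, IDFA.evalFrom, List.foldl_append]

theorem aux_foldl_none {σ : Type} (A : IDFA Unit σ) (v : List Unit) :
    v.foldl (fun oq a => oq.bind fun p => A.step p a) (none : Option σ) = none := by
  induction v with
  | nil => rfl
  | cons a v ih => simpa using ih

def cyc (N : ℕ) (S : ℕ → Prop) : IDFA Unit (ZMod N) where
  step q _ := some (q + 1)
  start := 0
  accept := {q | S q.val}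

theorem cyc_eval (N : ℕ) (S : ℕ → Prop) (w : List Unit) :
    (cyc N S).eval w = some (w.length : ZMod N) := by
  induction w using List.reverseRecOn with
  | nil => simp [IDFA.eval, IDFA.evalFrom, cyc]
  | append_singleton w a ih =>
    rw [aux_eval_append, ih]
    simp [cyc]

theorem cyc_accepts (N : ℕ) (S : ℕ → Prop) (hper : Function.Periodic S N) :
    (cyc N S).accepts = {w | S w.length} := by
  ext w
  simp only [IDFA.accepts, Set.mem_setOf_eq, cyc_eval, Option.some.injEq]
  have h : S (w.length % N) = S w.length := hper.map_mod_nat _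
  constructor
  · rintro ⟨q, hq, rfl⟩
    have hq' : S (ZMod.val (w.length : ZMod N)) := hq
    rwa [ZMod.val_natCast, h] at hq'
  · intro hw
    refine ⟨_, ?_, rfl⟩
    show S (ZMod.val (w.length : ZMod N))
    rwa [ZMod.val_natCast, h]

theorem lang_tc (N : ℕ) (hN : 0 < N) (S : ℕ → Prop) (hper : Function.Periodic S N) (h0 : S 0)
    (hp : ∀ d, 0 < d → d < N → ∃ x, S x ∧ ¬ S (x + d)) :
    IsRegularLang {w : List Unit | S w.length} ∧ tc {w : List Unit | S w.length} = N := by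
  haveI : NeZero N := ⟨hN.ne'⟩
  refine ⟨⟨ZMod N, inferInstance, cyc N S, cyc_accepts N S hper⟩, ?_⟩
  have hmul : ∀ m x, S (x + m * N) = S x := fun m x => by
    simpa using hper.nat_mul m x
  apply le_antisymm
  · apply Nat.sInf_le
    refine ⟨ZMod N, inferInstance, cyc N S, cyc_accepts N S hper, ?_⟩
    simp [IDFA.trCount, cyc, Set.ncard_univ]
  · apply le_csInf
    · exact ⟨_, ZMod N, inferInstance, cyc N S, cyc_accepts N S hper, rfl⟩
    rintro n ⟨σ, hσ, A, hA, rfl⟩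
    have hmem : ∀ m, S m ↔ ∃ q ∈ A.accept, A.eval (List.replicate m ()) = some q := by
      intro m
      have : List.replicate m () ∈ A.accepts ↔ S m := by rw [hA]; simp
      rw [← this]; rfl
    have hdef : ∀ m, ∃ q, A.eval (List.replicate m ()) = some q := by
      intro m
      by_contra hcon
      have hnone : A.eval (List.replicate m ()) = none := by
        rw [Option.eq_none_iff_forall_ne_some]
        exact fun q hq => hcon ⟨q, hq⟩
      have hS : S (m * N) := by
        have := hmul m 0
        rw [Nat.zero_add] at this
        rw [this]; exact h0
      obtain ⟨q, -, hq⟩ := (hmem _).1 hS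
      have hle : m ≤ m * N := Nat.le_mul_of_pos_right m hN
      obtain ⟨k, hk⟩ := Nat.exists_eq_add_of_le hle
      rw [hk, List.replicate_add, aux_eval_append, hnone, aux_foldl_none] at hq
      cases hq
    choose f hf using hdef
    have hstep : ∀ m, A.step (f m) () = some (f (m + 1)) := by
      intro m
      have := hf (m + 1)
      rw [List.replicate_add, aux_eval_append, hf m] at this
      simpa using this
    have key : ∀ i j, i < j → j < N → f i ≠ f j := by
      intro i j hij hj heq
      obtain ⟨x, hx, hx'⟩ := hp (j - i) (by omega) (by omega)
      have hle : i ≤ i * N := Nat.le_mul_of_pos_right i hN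
      obtain ⟨k, hk⟩ := Nat.exists_eq_add_of_le hle
      have hk1 : S (i + (k + x)) := by
        have : i + (k + x) = x + i * N := by omega
        rw [this, hmul]; exact hx
      have hk2 : ¬ S (j + (k + x)) := by
        have : j + (k + x) = (x + (j - i)) + i * N := by omega
        rw [this, hmul]; exact hx'
      apply hk2
      rw [hmem] at hk1 ⊢
      rw [List.replicate_add, aux_eval_append, hf] at hk1 ⊢
      rw [← heq]; exact hk1
    have hinj : Function.Injective (fun i : Fin N => (f i, ())) := by
      intro i j hij
      have hij' : f i = f j := by simpa using hij
      rcases lt_trichotomy (i : ℕ) j with h | h | h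
      · exact absurd hij' (key _ _ h j.2)
      · exact Fin.ext h
      · exact absurd hij'.symm (key _ _ h i.2)
    have hsub : Set.range (fun i : Fin N => (f i, ())) ⊆
        {p : σ × Unit | (A.step p.1 p.2).isSome} := by
      rintro _ ⟨i, rfl⟩
      simp [hstep]
    have := Set.ncard_le_ncard hsub (Set.toFinite _)
    rw [Set.ncard_range_of_injective hinj] at this
    simpa [IDFA.trCount] using this

theorem tc_union_unary_lower_bound
    (n₁ n₂ : ℕ) (hn₁ : 3 ≤ n₁) (hn₂ : 2 ≤ n₂) (hcop : Nat.Coprime n₁ n₂) :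
    ∃ L₁ L₂ : Set (List Unit), IsRegularLang L₁ ∧ IsRegularLang L₂ ∧
      tc L₁ = n₁ ∧ tc L₂ = n₂ ∧ tc (L₁ ∪ L₂) = n₁ * n₂ := by
  have single : ∀ n, 0 < n → IsRegularLang {w : List Unit | n ∣ w.length} ∧
      tc {w : List Unit | n ∣ w.length} = n := by
    intro n hn
    refine lang_tc n hn (fun x => n ∣ x) (fun x => by simp) (by simp) ?_
    intro d hd hdn
    exact ⟨0, by simp, by simpa using Nat.not_dvd_of_pos_of_lt hd hdn⟩
  refine ⟨{w | n₁ ∣ w.length}, {w | n₂ ∣ w.length}, (single n₁ (by omega)).1,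
    (single n₂ (by omega)).1, (single n₁ (by omega)).2, (single n₂ (by omega)).2, ?_⟩
  refine (lang_tc (n₁ * n₂) (by positivity) (fun x => n₁ ∣ x ∨ n₂ ∣ x) ?_ (by simp) ?_).2
  · intro x
    simp [Nat.dvd_add_left (Dvd.intro _ rfl : n₁ ∣ n₁ * n₂),
      Nat.dvd_add_left (Dvd.intro_left _ rfl : n₂ ∣ n₁ * n₂)]
  · intro d hd hdN
    have cross : ∀ a b : ℕ, 2 ≤ b → Nat.Coprime a b → ¬ a ∣ d → b ∣ d →
        ∃ x, a ∣ x ∧ ¬ a ∣ (x + d) ∧ ¬ b ∣ (x + d) := by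
      intro a b hb hab ha hbd
      obtain ⟨x, hx0, hx1⟩ := Nat.chineseRemainder hab 0 1
      have hax : a ∣ x := (Nat.modEq_zero_iff_dvd).1 hx0
      refine ⟨x, hax, ?_, ?_⟩
      · rwa [Nat.dvd_add_right hax]
      · rw [Nat.dvd_add_left hbd, hx1.dvd_iff dvd_rfl]
        intro h
        have := Nat.le_of_dvd one_pos h
        omega
    by_cases h1 : n₁ ∣ d
    · have h2 : ¬ n₂ ∣ d := fun h2 =>
        Nat.not_dvd_of_pos_of_lt hd hdN (hcop.mul_dvd_of_dvd_of_dvd h1 h2)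
      obtain ⟨x, hx, hx1, hx2⟩ := cross n₂ n₁ (by omega) hcop.symm h2 h1
      exact ⟨x, Or.inr hx, by tauto⟩
    · by_cases h2 : n₂ ∣ d
      · obtain ⟨x, hx, hx1, hx2⟩ := cross n₁ n₂ hn₂ hcop h1 h2
        exact ⟨x, Or.inl hx, by tauto⟩
      · exact ⟨0, by simp, by simp [h1, h2]⟩
end

section
/- For any relatively prime positive integers n₁ and n₂, the languages Lᵢ = (b^{nᵢ})* (i = 1, 2) over the unary alphabet {b} satisfy tc(Lᵢ) = nᵢ and tc(L₁ ∩ L₂) = n₁·n₂. -/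
theorem evalFrom_replicate_succ {σ : Type} (A : IDFA Unit σ) (m : ℕ) :
    A.eval (List.replicate (m + 1) ()) =
      (A.eval (List.replicate m ())).bind fun p => A.step p () := by
  unfold IDFA.eval IDFA.evalFrom
  rw [List.replicate_succ', List.foldl_append]
  rfl

theorem tc_unary_lower (n : ℕ) (hn : 1 ≤ n) {σ : Type} [Finite σ] (A : IDFA Unit σ)
    (hA : A.accepts = {w : List Unit | ∃ k : ℕ, w = List.replicate (k * n) ()}) :
    n ≤ A.trCount := by
  have mem : ∀ m, (∃ q ∈ A.accept, A.eval (List.replicate m ()) = some q) ↔ n ∣ m := by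
    intro m
    have h1 : List.replicate m () ∈ A.accepts ↔ ∃ k : ℕ,
        List.replicate m () = List.replicate (k * n) () := by
      rw [hA]; rfl
    refine Iff.trans h1 ⟨?_, ?_⟩
    · rintro ⟨k, hk⟩
      have := congrArg List.length hk
      simp only [List.length_replicate] at this
      exact ⟨k, by rw [this, mul_comm]⟩
    · rintro ⟨k, hk⟩
      exact ⟨k, by rw [hk, mul_comm]⟩
  have back : ∀ t m, (A.eval (List.replicate (m + t) ())).isSome →
      (A.eval (List.replicate m ())).isSome := by
    intro t
    induction t with
    | zero => intro m h; exact h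
    | succ t ih =>
      intro m h
      apply ih
      rw [← add_assoc, evalFrom_replicate_succ] at h
      cases hh : A.eval (List.replicate (m + t) ()) with
      | none => rw [hh] at h; simp at h
      | some x => rfl
  have ex : ∀ m, ∃ q, A.eval (List.replicate m ()) = some q := by
    intro m
    apply Option.isSome_iff_exists.1
    obtain ⟨t, ht⟩ := Nat.exists_eq_add_of_le (Nat.le_mul_of_pos_right m hn)
    obtain ⟨q, -, hq⟩ := (mem (m * n)).2 (Dvd.intro_left m rfl)
    apply back t
    rw [← ht, hq]; rfl
  choose q hq using ex
  have hstep : ∀ m, A.step (q m) () = some (q (m + 1)) := by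
    intro m
    have := evalFrom_replicate_succ A m
    rw [hq, hq] at this
    exact this.symm
  have hacc : ∀ m, q m ∈ A.accept ↔ n ∣ m := by
    intro m
    rw [← mem m, hq m]
    constructor
    · intro h; exact ⟨_, h, rfl⟩
    · rintro ⟨p, hp, h⟩
      rw [Option.some.inj h]; exact hp
  have shift : ∀ i j, q i = q j → ∀ t, q (i + t) = q (j + t) := by
    intro i j h t
    induction t with
    | zero => exact h
    | succ t ih =>
      have h1 := hstep (i + t)
      rw [ih, hstep] at h1
      exact (Option.some.inj h1).symm
  have key : ∀ i j, i ≤ j → j < n → q i = q j → i = j := by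
    intro i j hij hj h
    have h1 := shift i j h (n - i)
    have h2 := (hacc (i + (n - i))).2 (by rw [Nat.add_sub_cancel' (by omega)])
    rw [h1, hacc] at h2
    have h3 : j + (n - i) = n + (j - i) := by omega
    rw [h3, Nat.dvd_add_right dvd_rfl] at h2
    have := Nat.eq_zero_of_dvd_of_lt h2 (by omega)
    omega
  have inj : Function.Injective (fun i : Fin n => ((q i, ()) : σ × Unit)) := by
    intro i j h
    have h' : q i = q j := congrArg Prod.fst h
    apply Fin.ext
    rcases le_total (i : ℕ) j with hij | hij
    · exact key _ _ hij j.2 h'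
    · exact (key _ _ hij i.2 h'.symm).symm
  have hc : (Set.range (fun i : Fin n => ((q i, ()) : σ × Unit))).ncard = n := by
    rw [← Set.image_univ, Set.ncard_image_of_injective _ inj, Set.ncard_univ, Nat.card_fin]
  unfold IDFA.trCount
  conv_lhs => rw [← hc]
  apply Set.ncard_le_ncard _ (Set.toFinite _)
  rintro _ ⟨i, rfl⟩
  simp [hstep]

theorem tc_unary (n : ℕ) (hn : 1 ≤ n) :
    tc {w : List Unit | ∃ k : ℕ, w = List.replicate (k * n) ()} = n := by
  haveI : NeZero n := ⟨by omega⟩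
  have hmem : n ∈ {m | ∃ (σ : Type) (_ : Finite σ) (A : IDFA Unit σ),
      A.accepts = {w : List Unit | ∃ k : ℕ, w = List.replicate (k * n) ()} ∧
      A.trCount = m} := by
    let A : IDFA Unit (ZMod n) := ⟨fun q _ => some (q + 1), 0, {0}⟩
    refine ⟨ZMod n, inferInstance, A, ?_, ?_⟩
    · have hrun : ∀ m : ℕ, A.eval (List.replicate m ()) = some (m : ZMod n) := by
        intro m
        induction m with
        | zero => simp [IDFA.eval, IDFA.evalFrom, A]
        | succ m ih => rw [evalFrom_replicate_succ, ih]; simp [A]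
      ext w
      obtain ⟨m, rfl⟩ : ∃ m, w = List.replicate m () :=
        ⟨w.length, List.eq_replicate_iff.2 ⟨rfl, fun _ _ => rfl⟩⟩
      constructor
      · rintro ⟨q, hq, h⟩
        rw [hrun] at h
        have h0 : (m : ZMod n) = 0 := (Option.some.inj h).trans hq
        obtain ⟨k, hk⟩ := (ZMod.natCast_eq_zero_iff m n).1 h0
        exact ⟨k, by rw [hk, mul_comm]⟩
      · rintro ⟨k, hk⟩
        rw [hk]
        exact ⟨0, rfl, by rw [hrun]; simp⟩
    · simp [IDFA.trCount, A, Set.ncard_univ]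
  apply le_antisymm
  · exact Nat.sInf_le hmem
  · obtain ⟨σ, hσ, A, hA, hc⟩ := Nat.sInf_mem ⟨n, hmem⟩
    have := tc_unary_lower n hn A hA
    rw [hc] at this
    exact this

/-- for relatively prime positive `n₁, n₂`, the unary languages
`Lᵢ = (b^{nᵢ})* = {b^{k·nᵢ} : k ≥ 0}` satisfy `tc(Lᵢ) = nᵢ` and
`tc(L₁ ∩ L₂) = n₁·n₂`. -/
theorem tc_inter_unary_witness
    (n₁ n₂ : ℕ) (hn₁ : 1 ≤ n₁) (hn₂ : 1 ≤ n₂) (hcop : Nat.Coprime n₁ n₂) :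
    tc {w : List Unit | ∃ k : ℕ, w = List.replicate (k * n₁) ()} = n₁ ∧
    tc {w : List Unit | ∃ k : ℕ, w = List.replicate (k * n₂) ()} = n₂ ∧
    tc ({w : List Unit | ∃ k : ℕ, w = List.replicate (k * n₁) ()} ∩
        {w : List Unit | ∃ k : ℕ, w = List.replicate (k * n₂) ()}) = n₁ * n₂ := by
  refine ⟨tc_unary n₁ hn₁, tc_unary n₂ hn₂, ?_⟩
  rw [← tc_unary (n₁ * n₂) (Nat.mul_pos hn₁ hn₂)]
  congr 1
  ext w
  constructor
  · rintro ⟨⟨k, hk⟩, ⟨l, hl⟩⟩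
    have h : k * n₁ = l * n₂ := by
      have := congrArg List.length (hk.symm.trans hl)
      simpa only [List.length_replicate] using this
    obtain ⟨c, hc⟩ := hcop.mul_dvd_of_dvd_of_dvd (Dvd.intro_left k rfl) (Dvd.intro_left l h.symm)
    exact ⟨c, by rw [hk, hc, mul_comm]⟩
  · rintro ⟨k, hk⟩
    exact ⟨⟨k * n₂, by rw [hk]; congr 1; ring⟩, ⟨k * n₁, by rw [hk]; congr 1; ring⟩⟩
end

section
/- For all regular languages L₁ and L₂ over a finite alphabet Σ and every b ∈ Σ, tc_b(L₁ ∩ L₂) ≤ tc_b(L₁)·tc_b(L₂). Moreover, for relatively prime positive integers n₁ and n₂ there exist regular languages L₁, L₂ with tc_b(Lᵢ) = nᵢ (i = 1, 2) such that tc_b(L₁ ∩ L₂) = n₁·n₂. -/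
namespace IDFA

theorem evalFrom_append_aux {α σ : Type} (A : IDFA α σ) (q : σ) (u v : List α) :
    A.evalFrom q (u ++ v) = (A.evalFrom q u).bind (fun p => A.evalFrom p v) := by
  have hn : ∀ v : List α,
      v.foldl (fun oq a => oq.bind fun p => A.step p a) (none : Option σ) = none := by
    intro v
    induction v with
    | nil => rfl
    | cons a v ih => simpa using ih
  unfold evalFrom
  rw [List.foldl_append]
  cases h : u.foldl (fun oq a => oq.bind fun p => A.step p a) (some q) with
  | none => rw [hn]; rfl
  | some p => rfl

theorem evalFrom_snoc_aux {α σ : Type} (A : IDFA α σ) (q : σ) (u : List α) (a : α) :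
    A.evalFrom q (u ++ [a]) = (A.evalFrom q u).bind (fun p => A.step p a) := by
  rw [evalFrom_append_aux]; rfl

/-- product automaton -/
def prodAux {α σ τ : Type} (A : IDFA α σ) (B : IDFA α τ) : IDFA α (σ × τ) where
  step p a := (A.step p.1 a).bind fun x => (B.step p.2 a).map fun y => (x, y)
  start := (A.start, B.start)
  accept := {p | p.1 ∈ A.accept ∧ p.2 ∈ B.accept}

theorem prodAux_eval {α σ τ : Type} (A : IDFA α σ) (B : IDFA α τ) (w : List α) :
    (prodAux A B).eval w = (A.eval w).bind fun x => (B.eval w).map fun y => (x, y) := by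
  induction w using List.reverseRecOn with
  | nil => rfl
  | append_singleton u a ih =>
    unfold eval at *
    rw [evalFrom_snoc_aux, evalFrom_snoc_aux, evalFrom_snoc_aux, ih]
    cases A.evalFrom A.start u <;> cases B.evalFrom B.start u <;> simp [prodAux]

theorem prodAux_accepts {α σ τ : Type} (A : IDFA α σ) (B : IDFA α τ) :
    (prodAux A B).accepts = A.accepts ∩ B.accepts := by
  ext w
  simp only [accepts, Set.mem_inter_iff, Set.mem_ofPred_eq, prodAux_eval]
  cases A.eval w <;> cases B.eval w <;> simp [prodAux]

theorem prodAux_count {α σ τ : Type} (A : IDFA α σ) (B : IDFA α τ) (b : α) :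
    (prodAux A B).trCountOn b = A.trCountOn b * B.trCountOn b := by
  unfold trCountOn
  rw [← Set.ncard_prod]
  congr 1
  ext ⟨p, q⟩
  simp only [Set.mem_ofPred_eq, Set.mem_prod, prodAux]
  cases A.step p b <;> cases B.step q b <;> simp

/-- cyclic automaton -/
def cycAux (α : Type) (n : ℕ) : IDFA α (ZMod n) where
  step q _ := some (q + 1)
  start := 0
  accept := {0}

theorem cycAux_eval (α : Type) (n : ℕ) (w : List α) :
    (cycAux α n).eval w = some (w.length : ZMod n) := by
  induction w using List.reverseRecOn with
  | nil => simp [eval, evalFrom, cycAux]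
  | append_singleton u a ih =>
    unfold eval at *
    rw [evalFrom_snoc_aux, ih]
    simp [cycAux]

theorem cycAux_accepts (α : Type) (n : ℕ) :
    (cycAux α n).accepts = {w | n ∣ w.length} := by
  ext w
  simp only [accepts, Set.mem_ofPred_eq, cycAux_eval]
  simp [cycAux, ZMod.natCast_eq_zero_iff]

theorem cycAux_count (α : Type) (n : ℕ) (b : α) : (cycAux α n).trCountOn b = n := by
  simp [trCountOn, cycAux, Set.ncard_univ]

theorem le_count_aux {α σ : Type} [Finite σ] (A : IDFA α σ) (b : α) (n : ℕ) (hn : 1 ≤ n)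
    (hA : A.accepts = {w | n ∣ w.length}) : n ≤ A.trCountOn b := by
  have hmem : ∀ k, List.replicate k b ∈ A.accepts ↔ n ∣ k := by
    intro k; rw [hA]; simp
  obtain ⟨qf, hqf, hrun⟩ := (hmem n).2 dvd_rfl
  have hdef : ∀ k, k ≤ n → ∃ q, A.eval (List.replicate k b) = some q := by
    intro k hk
    have h : List.replicate n b = List.replicate k b ++ List.replicate (n - k) b := by
      rw [← List.replicate_add]; congr 1; omega
    rw [h, eval, evalFrom_append_aux] at hrun
    obtain ⟨q, hq, -⟩ := Option.bind_eq_some_iff.1 hrun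
    exact ⟨q, hq⟩
  have hne : Nonempty σ := ⟨A.start⟩
  choose! f hf using hdef
  have hsub : f '' (Set.Iio n) ⊆ {q : σ | (A.step q b).isSome} := by
    rintro _ ⟨k, hk, rfl⟩
    have hk : k < n := hk
    have h := hf (k + 1) hk
    rw [List.replicate_succ', eval, evalFrom_snoc_aux] at h
    have h2 := hf k hk.le
    rw [eval] at h2
    rw [h2] at h
    simp only [Option.bind_some] at h
    simp [h]
  have hinj : Set.InjOn f (Set.Iio n) := by
    have key : ∀ i j, i < n → j < n → f i = f j → n ∣ j + (n - i) := by
      intro i j hi hj hij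
      have hi' := hf i hi.le
      have hj' := hf j hj.le
      have e : A.eval (List.replicate (j + (n - i)) b) = A.eval (List.replicate n b) := by
        have h : List.replicate n b = List.replicate i b ++ List.replicate (n - i) b := by
          rw [← List.replicate_add]; congr 1; omega
        rw [h, List.replicate_add]
        unfold eval at *
        rw [evalFrom_append_aux, evalFrom_append_aux, hi', hj', hij]
      exact (hmem _).1 ⟨qf, hqf, e.trans hrun⟩
    intro i hi j hj hij
    have hi : i < n := hi
    have hj : j < n := hj
    by_contra hne
    rcases lt_or_gt_of_ne hne with h | h
    · have := key i j hi hj hij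
      rw [show j + (n - i) = (j - i) + n by omega, Nat.dvd_add_self_right] at this
      have := Nat.le_of_dvd (by omega) this
      omega
    · have := key j i hj hi hij.symm
      rw [show i + (n - j) = (i - j) + n by omega, Nat.dvd_add_self_right] at this
      have := Nat.le_of_dvd (by omega) this
      omega
  have := Set.ncard_le_ncard hsub (Set.toFinite _)
  rw [Set.ncard_image_of_injOn hinj] at this
  have h3 : (Set.Iio n).ncard = n := by
    rw [← Finset.coe_Iio, Set.ncard_coe_finset]; simp
  rw [h3] at this
  exact this

end IDFA

theorem tcOn_cyc_aux {α : Type} (b : α) (n : ℕ) (hn : 1 ≤ n) :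
    tcOn {w : List α | n ∣ w.length} b = n := by
  have : NeZero n := ⟨by omega⟩
  apply le_antisymm
  · exact Nat.sInf_le ⟨ZMod n, inferInstance, IDFA.cycAux α n, IDFA.cycAux_accepts α n,
      IDFA.cycAux_count α n b⟩
  · apply le_csInf
    · exact ⟨n, ZMod n, inferInstance, IDFA.cycAux α n, IDFA.cycAux_accepts α n,
        IDFA.cycAux_count α n b⟩
    · rintro m ⟨σ, hσ, A, hA, rfl⟩
      exact IDFA.le_count_aux A b n hn hA

theorem tcOn_spec_aux {α : Type} (L : Set (List α)) (b : α) (h : IsRegularLang L) :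
    ∃ (σ : Type) (_ : Finite σ) (A : IDFA α σ), A.accepts = L ∧ A.trCountOn b = tcOn L b := by
  obtain ⟨σ, hσ, A, hA⟩ := h
  exact Nat.sInf_mem
    (s := {n | ∃ (σ : Type) (_ : Finite σ) (A : IDFA α σ), A.accepts = L ∧ A.trCountOn b = n})
    ⟨_, σ, hσ, A, hA, rfl⟩

/-- `tc_b(L₁ ∩ L₂) ≤ tc_b(L₁)·tc_b(L₂)` for all regular languages,
and for relatively prime positive `n₁, n₂` the bound is attained. -/
theorem tcOn_inter_le_and_tight {α : Type} [Finite α] (b : α) :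
    (∀ L₁ L₂ : Set (List α), IsRegularLang L₁ → IsRegularLang L₂ →
      tcOn (L₁ ∩ L₂) b ≤ tcOn L₁ b * tcOn L₂ b) ∧
    (∀ n₁ n₂ : ℕ, 1 ≤ n₁ → 1 ≤ n₂ → Nat.Coprime n₁ n₂ →
      ∃ L₁ L₂ : Set (List α), IsRegularLang L₁ ∧ IsRegularLang L₂ ∧
        tcOn L₁ b = n₁ ∧ tcOn L₂ b = n₂ ∧
        tcOn (L₁ ∩ L₂) b = n₁ * n₂) := by
  constructor
  · intro L₁ L₂ h₁ h₂
    obtain ⟨σ, hσ, A, hA, hAc⟩ := tcOn_spec_aux L₁ b h₁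
    obtain ⟨τ, hτ, B, hB, hBc⟩ := tcOn_spec_aux L₂ b h₂
    rw [← hAc, ← hBc, ← IDFA.prodAux_count]
    refine Nat.sInf_le ⟨σ × τ, inferInstance, IDFA.prodAux A B, ?_, rfl⟩
    rw [IDFA.prodAux_accepts, hA, hB]
  · intro n₁ n₂ h₁ h₂ hc
    have : NeZero n₁ := ⟨by omega⟩
    have : NeZero n₂ := ⟨by omega⟩
    refine ⟨{w | n₁ ∣ w.length}, {w | n₂ ∣ w.length},
      ⟨ZMod n₁, inferInstance, _, IDFA.cycAux_accepts α n₁⟩,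
      ⟨ZMod n₂, inferInstance, _, IDFA.cycAux_accepts α n₂⟩,
      tcOn_cyc_aux b n₁ h₁, tcOn_cyc_aux b n₂ h₂, ?_⟩
    have e : ({w | n₁ ∣ w.length} ∩ {w | n₂ ∣ w.length} : Set (List α))
        = {w | n₁ * n₂ ∣ w.length} := by
      ext w
      constructor
      · rintro ⟨h, h'⟩
        exact hc.mul_dvd_of_dvd_of_dvd h h'
      · intro h
        exact ⟨dvd_of_mul_right_dvd h, dvd_of_mul_left_dvd h⟩
    rw [e]
    exact tcOn_cyc_aux b _ (Nat.mul_pos h₁ h₂)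
end
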